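/- arXiv:1007.1474 — 7 statements merged into one kernel-verified Lean document; each statement's English description precedes it below -/
import Mathlib

section
/- For all real numbers τ_L > 0 and τ_R > 0 there exists a unique d ∈ (0,1) such that τ_L^d + τ_R^d = (1 + τ_L + τ_R)^d. -/
/-!
Dividing by the right-hand side turns the equation into the Moran equation `∑ i, r i ^ d = 1` for
the ratios `r i`, which are positive with `∑ i, r i < 1`. Its left-hand side is continuous and
strictly decreasing in `d`; at `d = 0` it is the number of ratios, at `d = 1` it is their sum.
-/

open Finset

section MoranEquation

variable {ι : Type*} {s : Finset ι}

theorem continuous_sum_const_rpow {r : ι → ℝ} (hr : ∀ i ∈ s, r i ≠ 0) :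
    Continuous fun d : ℝ => ∑ i ∈ s, r i ^ d :=
  continuous_finsetSum s fun i hi => Real.continuous_const_rpow (hr i hi)

theorem strictAnti_sum_const_rpow {r : ι → ℝ} (hs : s.Nonempty) (hr : ∀ i ∈ s, 0 < r i)
    (hr_lt : ∀ i ∈ s, r i < 1) : StrictAnti fun d : ℝ => ∑ i ∈ s, r i ^ d :=
  fun _ _ hde => sum_lt_sum_of_nonempty hs fun i hi =>
    Real.rpow_lt_rpow_of_exponent_gt (hr i hi) (hr_lt i hi) hde

theorem existsUnique_sum_rpow_eq_one {r : ι → ℝ} (hs : 1 < #s) (hr : ∀ i ∈ s, 0 < r i)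
    (hsum : ∑ i ∈ s, r i < 1) :
    ∃! d : ℝ, d ∈ Set.Ioo (0 : ℝ) 1 ∧ ∑ i ∈ s, r i ^ d = 1 := by
  have hr_lt : ∀ i ∈ s, r i < 1 := fun i hi =>
    (single_le_sum (fun j hj => (hr j hj).le) hi).trans_lt hsum
  have hanti := strictAnti_sum_const_rpow (card_pos.mp (by lia)) hr hr_lt
  have hcont := continuous_sum_const_rpow fun i hi => (hr i hi).ne'
  have at_one : ∑ i ∈ s, r i ^ (1 : ℝ) < 1 := by simpa only [Real.rpow_one] using hsum
  have at_zero : 1 < ∑ i ∈ s, r i ^ (0 : ℝ) := by simpa using hs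
  obtain ⟨d, hd, hd_eq⟩ :=
    intermediate_value_Ioo' zero_le_one hcont.continuousOn ⟨at_one, at_zero⟩
  exact ⟨d, ⟨hd, hd_eq⟩, fun e he => hanti.injective (he.2.trans hd_eq.symm)⟩

theorem sum_div_rpow_eq_one_iff {t : ι → ℝ} {T : ℝ} (ht : ∀ i ∈ s, 0 ≤ t i) (hT : 0 < T)
    (d : ℝ) : ∑ i ∈ s, (t i / T) ^ d = 1 ↔ ∑ i ∈ s, t i ^ d = T ^ d := by
  have hdiv : ∑ i ∈ s, (t i / T) ^ d = (∑ i ∈ s, t i ^ d) / T ^ d := by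
    rw [sum_div]
    exact sum_congr rfl fun i hi => Real.div_rpow (ht i hi) hT.le d
  rw [hdiv, div_eq_one_iff_eq (Real.rpow_pos_of_pos hT d).ne']

theorem unique_dimension_exponent_general {t : ι → ℝ} {T : ℝ} (hs : 1 < #s)
    (ht : ∀ i ∈ s, 0 < t i) (hT : ∑ i ∈ s, t i < T) :
    ∃! d : ℝ, d ∈ Set.Ioo (0 : ℝ) 1 ∧ ∑ i ∈ s, t i ^ d = T ^ d := by
  have hT_pos : 0 < T := (sum_nonneg fun i hi => (ht i hi).le).trans_lt hT
  have hratio_sum : ∑ i ∈ s, t i / T < 1 := by rwa [← sum_div, div_lt_one hT_pos]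
  simpa only [sum_div_rpow_eq_one_iff (fun i hi => (ht i hi).le) hT_pos] using
    existsUnique_sum_rpow_eq_one hs (fun i hi => div_pos (ht i hi) hT_pos) hratio_sum

end MoranEquation

/-- For all real numbers `τL > 0` and `τR > 0` there exists a unique `d ∈ (0,1)`
such that `τL ^ d + τR ^ d = (1 + τL + τR) ^ d` (real powers). -/
theorem unique_dimension_exponent (τL τR : ℝ) (hL : 0 < τL) (hR : 0 < τR) :
    ∃! d : ℝ, d ∈ Set.Ioo (0 : ℝ) 1 ∧
      τL ^ d + τR ^ d = (1 + τL + τR) ^ d := by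
  simpa [Fin.sum_univ_two] using unique_dimension_exponent_general (s := univ) (t := ![τL, τR])
    (T := 1 + τL + τR) (by simp) (by simp [Fin.forall_fin_two, hL, hR]) (by simp [add_assoc])
end

section
/- Let τ_L, τ_R > 0 and let d ∈ (0,1) satisfy τ_L^d + τ_R^d = (1 + τ_L + τ_R)^d. Then min { x^d + y^d : x ≥ 0, y ≥ 0, x + y ≤ 1, x ≥ τ_L(1 − x − y), y ≥ τ_R(1 − x − y) } = 1; that is, every (x,y) in this constraint set satisfies x^d + y^d ≥ 1, and the value 1 is attained on the set (for example at x = τ_L/(1+τ_L+τ_R), y = τ_R/(1+τ_L+τ_R)). -/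
/-!
For `n` parameters `τ i` the constraint set is the simplex spanned by the standard basis vectors and
the apex with coordinates `τ i / (1 + ∑ j, τ j)`. In the barycentric coordinates `x i - τ i * w` and
`(1 + ∑ j, τ j) * w`, where `w = 1 - ∑ j, x j`, the coordinate `x i` is a combination of `1`, `0`
and the `i`-th coordinate of the apex. Concavity of `t ↦ t ^ d` bounds `x i ^ d` below coordinate by
coordinate, and summing gives the bound `1`, since `∑ i, x i ^ d` equals `1` at every vertex: at
the apex this is the equation satisfied by `d`.
-/

lemma smul_add_smul_le_map_of_concaveOn {𝕜 E β : Type*} [Field 𝕜] [LinearOrder 𝕜]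
    [IsStrictOrderedRing 𝕜] [AddCommGroup E] [Module 𝕜 E] [AddCommGroup β] [PartialOrder β]
    [IsOrderedAddMonoid β] [Module 𝕜 β] [IsStrictOrderedModule 𝕜 β] {s : Set E} {f : E → β}
    {p q : E} {u v : 𝕜} (hf : ConcaveOn 𝕜 s f) (h0 : 0 ∈ s) (hf0 : 0 ≤ f 0) (hp : p ∈ s)
    (hq : q ∈ s) (hu : 0 ≤ u) (hv : 0 ≤ v) (huv : u + v ≤ 1) :
    u • f p + v • f q ≤ f (u • p + v • q) := by
  have hrest : 0 ≤ 1 - (u + v) := sub_nonneg.2 huv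
  have hjensen := hf.le_map_sum (t := Finset.univ) (w := ![u, v, 1 - (u + v)]) (p := ![p, q, 0])
    (by simp [Fin.forall_fin_succ, hu, hv, huv])
    (by simp [Fin.sum_univ_three])
    (by simp [Fin.forall_fin_succ, hp, hq, h0])
  calc u • f p + v • f q ≤ u • f p + v • f q + (1 - (u + v)) • f 0 :=
        le_add_of_nonneg_right (smul_nonneg hrest hf0)
    _ ≤ f (u • p + v • q) := by simpa [Fin.sum_univ_three] using hjensen

section ConstraintSet

open Finset Set

variable {ι : Type*} [Fintype ι] {τ x : ι → ℝ} {d : ℝ}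

/-- The constraint set attached to finitely many parameters `τ`; the two coordinates of a point in
the case of left and right thickness are indexed by `Fin 2`. -/
def constraintSet (τ : ι → ℝ) : Set (ι → ℝ) :=
  {x | (∀ i, 0 ≤ x i) ∧ ∑ i, x i ≤ 1 ∧ ∀ i, τ i * (1 - ∑ j, x j) ≤ x i}

/-- The vertex of `constraintSet τ` at which all the constraints `τ i * (1 - ∑ j, x j) ≤ x i` are
equalities. -/
noncomputable def constraintApex (τ : ι → ℝ) (i : ι) : ℝ :=
  τ i / (1 + ∑ j, τ j)

lemma one_add_sum_pos (hτ : ∀ i, 0 ≤ τ i) : 0 < 1 + ∑ i, τ i :=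
  add_pos_of_pos_of_nonneg one_pos (sum_nonneg fun i _ ↦ hτ i)

lemma constraintApex_nonneg (hτ : ∀ i, 0 ≤ τ i) (i : ι) : 0 ≤ constraintApex τ i :=
  div_nonneg (hτ i) (one_add_sum_pos hτ).le

lemma one_sub_sum_constraintApex (hτ : ∀ i, 0 ≤ τ i) :
    1 - ∑ i, constraintApex τ i = 1 / (1 + ∑ i, τ i) := by
  have hS := (one_add_sum_pos hτ).ne'
  simp only [constraintApex, ← sum_div]
  field_simp
  ring

lemma constraintApex_mem_constraintSet (hτ : ∀ i, 0 ≤ τ i) :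
    constraintApex τ ∈ constraintSet τ := by
  have hslack := one_sub_sum_constraintApex hτ
  refine ⟨constraintApex_nonneg hτ, sub_nonneg.1 ?_, fun i ↦ ?_⟩
  · exact hslack ▸ (one_div_pos.2 (one_add_sum_pos hτ)).le
  · rw [hslack, mul_one_div, constraintApex]

lemma sum_constraintApex_rpow (hτ : ∀ i, 0 ≤ τ i) :
    ∑ i, constraintApex τ i ^ d = (∑ i, τ i ^ d) / (1 + ∑ i, τ i) ^ d := by
  simp only [constraintApex, sum_div, Real.div_rpow (hτ _) (one_add_sum_pos hτ).le]

lemma one_le_sum_map_of_mem_constraintSet {f : ℝ → ℝ} (hf : ConcaveOn ℝ (Ici 0) f)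
    (hf0 : 0 ≤ f 0) (hf1 : 1 ≤ f 1) (hτ : ∀ i, 0 ≤ τ i)
    (hapex : 1 ≤ ∑ i, f (constraintApex τ i)) (hx : x ∈ constraintSet τ) :
    1 ≤ ∑ i, f (x i) := by
  obtain ⟨-, hsum, hge⟩ := hx
  have hS := one_add_sum_pos hτ
  set w := 1 - ∑ i, x i with hw
  set v := (1 + ∑ i, τ i) * w with hv
  have hv0 : 0 ≤ v := mul_nonneg hS.le (sub_nonneg.2 hsum)
  have hu0 (i : ι) : 0 ≤ x i - τ i * w := sub_nonneg.2 (hge i)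
  have hbary : ∑ i, (x i - τ i * w) + v = 1 := by
    rw [sum_sub_distrib, ← sum_mul, hv]
    linear_combination hw
  have hcoord (i : ι) : (x i - τ i * w) * 1 + v * constraintApex τ i = x i := by
    rw [hv, constraintApex]
    field_simp
    ring
  have hconcave (i : ι) : (x i - τ i * w) + v * f (constraintApex τ i) ≤ f (x i) := by
    have hle : (x i - τ i * w) + v ≤ 1 := by
      rw [← hbary]
      gcongr
      exact single_le_sum (fun j _ ↦ hu0 j) (mem_univ i)
    calc (x i - τ i * w) + v * f (constraintApex τ i)
        ≤ (x i - τ i * w) * f 1 + v * f (constraintApex τ i) := by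
          gcongr
          exact le_mul_of_one_le_right (hu0 i) hf1
      _ ≤ f ((x i - τ i * w) * 1 + v * constraintApex τ i) :=
          smul_add_smul_le_map_of_concaveOn hf self_mem_Ici hf0 (mem_Ici.2 zero_le_one)
            (constraintApex_nonneg hτ i) (hu0 i) hv0 hle
      _ = f (x i) := by rw [hcoord]
  calc (1 : ℝ) = ∑ i, (x i - τ i * w) + v := hbary.symm
    _ ≤ ∑ i, (x i - τ i * w) + v * ∑ i, f (constraintApex τ i) := by
        gcongr
        exact le_mul_of_one_le_right hv0 hapex
    _ = ∑ i, ((x i - τ i * w) + v * f (constraintApex τ i)) := by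
        rw [sum_add_distrib, mul_sum]
    _ ≤ ∑ i, f (x i) := sum_le_sum fun i _ ↦ hconcave i

theorem min_of_power_sum_on_constraint_set_general (hτ : ∀ i, 0 ≤ τ i) (hd0 : 0 ≤ d)
    (hd1 : d ≤ 1) (heq : ∑ i, τ i ^ d = (1 + ∑ i, τ i) ^ d) :
    IsLeast ((fun x : ι → ℝ ↦ ∑ i, x i ^ d) '' constraintSet τ) 1 ∧
      ∑ i, constraintApex τ i ^ d = 1 := by
  have hapex : ∑ i, constraintApex τ i ^ d = 1 := by
    rw [sum_constraintApex_rpow hτ, heq, div_self]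
    exact (Real.rpow_pos_of_pos (one_add_sum_pos hτ) d).ne'
  refine ⟨⟨⟨constraintApex τ, constraintApex_mem_constraintSet hτ, hapex⟩, ?_⟩, hapex⟩
  rintro _ ⟨x, hx, rfl⟩
  exact one_le_sum_map_of_mem_constraintSet (Real.concaveOn_rpow hd0 hd1)
    (Real.rpow_nonneg le_rfl d) (Real.one_rpow d).ge hτ hapex.ge hx

end ConstraintSet

/-- Let `τL, τR > 0` and `d ∈ (0,1)` satisfy `τL ^ d + τR ^ d = (1 + τL + τR) ^ d`.
Then the minimum of `x ^ d + y ^ d` over the set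
`{(x,y) : x ≥ 0, y ≥ 0, x + y ≤ 1, x ≥ τL(1 - x - y), y ≥ τR(1 - x - y)}` equals `1`:
every point of the set satisfies `x ^ d + y ^ d ≥ 1`, and the value `1` is attained,
for example at `x = τL/(1+τL+τR)`, `y = τR/(1+τL+τR)`. -/
theorem min_of_power_sum_on_constraint_set (τL τR d : ℝ) (hL : 0 < τL) (hR : 0 < τR)
    (hd : d ∈ Set.Ioo (0 : ℝ) 1)
    (heq : τL ^ d + τR ^ d = (1 + τL + τR) ^ d) :
    IsLeast {z : ℝ | ∃ x y : ℝ, 0 ≤ x ∧ 0 ≤ y ∧ x + y ≤ 1 ∧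
        τL * (1 - x - y) ≤ x ∧ τR * (1 - x - y) ≤ y ∧ z = x ^ d + y ^ d} 1 ∧
    (τL / (1 + τL + τR)) ^ d + (τR / (1 + τL + τR)) ^ d = 1 := by
  have h := min_of_power_sum_on_constraint_set_general (τ := ![τL, τR])
    (by simp [Fin.forall_fin_two, hL.le, hR.le]) hd.1.le hd.2.le
    (by simpa [Fin.sum_univ_two, add_assoc] using heq)
  simpa [constraintSet, constraintApex, Set.image, Fin.exists_fin_succ_pi, Fin.exists_fin_zero_pi,
    Fin.forall_fin_two, Fin.sum_univ_two, and_assoc, ← add_assoc, ← sub_sub, eq_comm] using h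
end

section
/- Let τ_L, τ_R > 0 and let d ∈ (0,1) satisfy τ_L^d + τ_R^d = (1 + τ_L + τ_R)^d. Then d > log(1 + τ_L/(1+τ_R)) / log(1 + (1+τ_L)/τ_R) and d > log(1 + τ_R/(1+τ_L)) / log(1 + (1+τ_R)/τ_L). -/
open Real

/-!
Put `s = 1 + τL + τR`, `p = τL / s` and `q = τR / s`, so that `p + q < 1` and `p ^ d + q ^ d ≤ 1`.
Then `q ^ d < 1 - p`: for `d < 1` because `p < p ^ d`, and for `d ≥ 1` because `q ^ d ≤ q < 1 - p`.
In other words `s / (1 + τR) < (s / τR) ^ d`, and taking logarithms gives the first bound.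
Exchanging `τL` and `τR` gives the second.
-/

lemma rpow_lt_one_sub_of_rpow_add_rpow_le_one {p q d : ℝ} (hp : 0 < p) (hq : 0 < q)
    (hpq : p + q < 1) (h : p ^ d + q ^ d ≤ 1) : q ^ d < 1 - p := by
  rcases lt_or_ge d 1 with hd | hd
  · have hp_lt : p < p ^ d := self_lt_rpow_of_lt_one hp (by linarith) hd
    linarith
  · have hq_le : q ^ d ≤ q := rpow_le_self_of_le_one hq.le (by linarith) hd
    linarith

lemma div_sub_lt_div_rpow_of_rpow_add_rpow_le {a b s d : ℝ} (ha : 0 < a) (hb : 0 < b)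
    (hs : a + b < s) (h : a ^ d + b ^ d ≤ s ^ d) : s / (s - a) < (s / b) ^ d := by
  have hs0 : 0 < s := by linarith
  have hsum : a / s + b / s < 1 := by rwa [← add_div, div_lt_one hs0]
  have hpow : (a / s) ^ d + (b / s) ^ d ≤ 1 := by
    rwa [div_rpow ha.le hs0.le, div_rpow hb.le hs0.le, ← add_div,
      div_le_one (rpow_pos_of_pos hs0 d)]
  have hlt : (b / s) ^ d < 1 - a / s :=
    rpow_lt_one_sub_of_rpow_add_rpow_le_one (div_pos ha hs0) (div_pos hb hs0) hsum hpow
  calc s / (s - a) = (1 - a / s)⁻¹ := by rw [one_sub_div hs0.ne', inv_div]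
    _ < ((b / s) ^ d)⁻¹ := inv_strictAnti₀ (rpow_pos_of_pos (div_pos hb hs0) d) hlt
    _ = (s / b) ^ d := by rw [← inv_rpow (div_pos hb hs0).le, inv_div]

lemma log_div_log_lt_of_rpow_add_rpow_le {a b s d : ℝ} (ha : 0 < a) (hb : 0 < b)
    (hs : a + b < s) (h : a ^ d + b ^ d ≤ s ^ d) : log (s / (s - a)) / log (s / b) < d := by
  have hbase : 1 < s / b := by rw [one_lt_div hb]; linarith
  have harg : 0 < s / (s - a) := div_pos (by linarith) (by linarith)
  rw [log_div_log, logb_lt_iff_lt_rpow hbase harg]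
  exact div_sub_lt_div_rpow_of_rpow_add_rpow_le ha hb hs h

theorem log_lower_bounds_for_exponent_general {τL τR d : ℝ} (hL : 0 < τL) (hR : 0 < τR)
    (hle : τL ^ d + τR ^ d ≤ (1 + τL + τR) ^ d) :
    d > log (1 + τL / (1 + τR)) / log (1 + (1 + τL) / τR) ∧
    d > log (1 + τR / (1 + τL)) / log (1 + (1 + τR) / τL) := by
  have harg {a b : ℝ} (hb : 0 < b) : 1 + a / (1 + b) = (1 + a + b) / (1 + a + b - a) := by
    rw [one_add_div (by positivity)]
    congr 1 <;> ring
  have hbase {a b : ℝ} (hb : 0 < b) : 1 + (1 + a) / b = (1 + a + b) / b := by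
    rw [one_add_div hb.ne', add_comm b]
  constructor
  · rw [harg hR, hbase hR]
    exact log_div_log_lt_of_rpow_add_rpow_le hL hR (by linarith) hle
  · rw [harg hL, hbase hL]
    refine log_div_log_lt_of_rpow_add_rpow_le hR hL (by linarith) ?_
    rwa [add_comm, add_right_comm]

/-- Let `τL, τR > 0` and `d ∈ (0,1)` satisfy `τL ^ d + τR ^ d = (1 + τL + τR) ^ d`.
Then `d > log(1 + τL/(1+τR)) / log(1 + (1+τL)/τR)` and
`d > log(1 + τR/(1+τL)) / log(1 + (1+τR)/τL)`
(real powers and natural logarithm). -/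
theorem log_lower_bounds_for_exponent (τL τR d : ℝ) (hL : 0 < τL) (hR : 0 < τR)
    (hd : d ∈ Set.Ioo (0 : ℝ) 1)
    (heq : τL ^ d + τR ^ d = (1 + τL + τR) ^ d) :
    d > Real.log (1 + τL / (1 + τR)) / Real.log (1 + (1 + τL) / τR) ∧
    d > Real.log (1 + τR / (1 + τL)) / Real.log (1 + (1 + τR) / τL) :=
  log_lower_bounds_for_exponent_general hL hR heq.le
end

section
/- For every ν > 0, the limit as λ → 1 from the right of log(1 + (1/(λ−1)) / (1 + (λ−1)^ν)) / log(1 + (1 + 1/(λ−1)) / (λ−1)^ν) equals 1/(1+ν). -/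
open Real Filter Topology

/-!
Measured against `t = 1 / (λ - 1) → ∞`, the right thickness has size `t ^ (1 + o(1))` and the left
thickness `t ^ (-ν + o(1))`. Growth exponents of positive functions subtract under division and,
because `max f g ≤ f + g ≤ 2 * max f g`, take the maximum under addition. So the arguments of the
two logarithms have exponents `1` and `1 + ν`, and the ratio of the logarithms tends to the ratio of
the exponents.
-/

/-- The function `f` has growth exponent `a` relative to `t` along `l`: `f = t ^ (a + o(1))`, in the
intended case `t → ∞`. This is stated through logarithms, hence insensitive to constant factors;
positivity is a separate field because `Real.log x` is `log |x|` for negative `x`. -/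
structure HasGrowthExponent {α : Type*} (l : Filter α) (t f : α → ℝ) (a : ℝ) : Prop where
  eventually_pos : ∀ᶠ x in l, 0 < f x
  tendsto_log_div_log : Tendsto (fun x => log (f x) / log (t x)) l (𝓝 a)

namespace HasGrowthExponent

variable {α : Type*} {l : Filter α} {t f g : α → ℝ} {a b : ℝ}

protected lemma one : HasGrowthExponent l t (fun _ => 1) 0 where
  eventually_pos := .of_forall fun _ => one_pos
  tendsto_log_div_log := by simpa using tendsto_const_nhds

protected lemma self (ht : Tendsto t l atTop) : HasGrowthExponent l t t 1 where
  eventually_pos := ht.eventually_gt_atTop 0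
  tendsto_log_div_log := tendsto_const_nhds.congr' <| by
    filter_upwards [ht.eventually_gt_atTop 1] with x htx
    exact (div_self (log_pos htx).ne').symm

protected lemma div (hf : HasGrowthExponent l t f a) (hg : HasGrowthExponent l t g b) :
    HasGrowthExponent l t (fun x => f x / g x) (a - b) where
  eventually_pos := by
    filter_upwards [hf.eventually_pos, hg.eventually_pos] with x hfx hgx using div_pos hfx hgx
  tendsto_log_div_log := by
    refine (hf.tendsto_log_div_log.sub hg.tendsto_log_div_log).congr' ?_
    filter_upwards [hf.eventually_pos, hg.eventually_pos] with x hfx hgx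
    rw [log_div hfx.ne' hgx.ne', sub_div]

protected lemma inv (hf : HasGrowthExponent l t f a) :
    HasGrowthExponent l t (fun x => (f x)⁻¹) (-a) := by
  simpa only [one_div, zero_sub] using HasGrowthExponent.one.div hf

lemma rpow_const (hf : HasGrowthExponent l t f a) (r : ℝ) :
    HasGrowthExponent l t (fun x => f x ^ r) (r * a) where
  eventually_pos := hf.eventually_pos.mono fun _ hfx => rpow_pos_of_pos hfx r
  tendsto_log_div_log := by
    refine (hf.tendsto_log_div_log.const_mul r).congr' ?_
    filter_upwards [hf.eventually_pos] with x hfx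
    rw [log_rpow hfx, mul_div_assoc]

protected lemma max (hf : HasGrowthExponent l t f a) (hg : HasGrowthExponent l t g b)
    (ht : Tendsto t l atTop) : HasGrowthExponent l t (fun x => max (f x) (g x)) (max a b) where
  eventually_pos := hf.eventually_pos.mono fun _ hfx => lt_max_of_lt_left hfx
  tendsto_log_div_log := by
    refine (hf.tendsto_log_div_log.max hg.tendsto_log_div_log).congr' ?_
    filter_upwards [hf.eventually_pos, hg.eventually_pos, ht.eventually_gt_atTop 1]
      with x hfx hgx htx
    rw [max_div_div_right (log_pos htx).le, strictMonoOn_log.monotoneOn.map_max hfx hgx]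

protected lemma add (hf : HasGrowthExponent l t f a) (hg : HasGrowthExponent l t g b)
    (ht : Tendsto t l atTop) : HasGrowthExponent l t (fun x => f x + g x) (max a b) where
  eventually_pos := by
    filter_upwards [hf.eventually_pos, hg.eventually_pos] with x hfx hgx using add_pos hfx hgx
  tendsto_log_div_log := by
    have hmax := hf.max hg ht
    have htwo : Tendsto (fun x => log 2 / log (t x)) l (𝓝 0) :=
      (tendsto_log_atTop.comp ht).const_div_atTop _
    have htwo_max : Tendsto (fun x => log 2 / log (t x) + log (max (f x) (g x)) / log (t x))
        l (𝓝 (max a b)) := by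
      simpa only [zero_add] using htwo.add hmax.tendsto_log_div_log
    refine tendsto_of_tendsto_of_tendsto_of_le_of_le' hmax.tendsto_log_div_log htwo_max ?_ ?_
    · filter_upwards [hf.eventually_pos, hg.eventually_pos, ht.eventually_gt_atTop 1]
        with x hfx hgx htx
      have hlog : 0 < log (t x) := log_pos htx
      gcongr
      exact max_le_add_of_nonneg hfx.le hgx.le
    · filter_upwards [hf.eventually_pos, hg.eventually_pos, hmax.eventually_pos,
        ht.eventually_gt_atTop 1] with x hfx hgx hmx htx
      have hlog : 0 < log (t x) := log_pos htx
      rw [← add_div, ← log_mul two_ne_zero hmx.ne', two_mul]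
      gcongr
      · exact le_max_left _ _
      · exact le_max_right _ _

lemma tendsto_log_div_log_of_ne_zero (hf : HasGrowthExponent l t f a)
    (hg : HasGrowthExponent l t g b) (hb : b ≠ 0) :
    Tendsto (fun x => log (f x) / log (g x)) l (𝓝 (a / b)) := by
  refine (hf.tendsto_log_div_log.div hg.tendsto_log_div_log hb).congr' ?_
  filter_upwards [hg.tendsto_log_div_log.eventually_ne hb] with x hx
  exact div_div_div_cancel_right₀ (div_ne_zero_iff.mp hx).2 _ _

end HasGrowthExponent

lemma tendsto_one_div_sub_nhdsGT {𝕜 : Type*} [Field 𝕜] [LinearOrder 𝕜] [IsStrictOrderedRing 𝕜]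
    [TopologicalSpace 𝕜] [OrderTopology 𝕜] (a : 𝕜) :
    Tendsto (fun x => 1 / (x - a)) (𝓝[>] a) atTop := by
  have hsub : Tendsto (fun x => x - a) (𝓝[>] a) (𝓝[>] 0) :=
    (map_subRight_nhdsGT.trans (by rw [sub_self])).le
  simpa only [one_div, Function.comp_def] using tendsto_inv_nhdsGT_zero.comp hsub

theorem limit_of_dimension_bound_general {α : Type*} {l : Filter α} {t τL τR : α → ℝ} {ρ ν : ℝ}
    (ht : Tendsto t l atTop) (hR : HasGrowthExponent l t τR ρ)
    (hL : HasGrowthExponent l t τL (-ν)) (hρ : 0 ≤ ρ) (hν : 0 ≤ ν) (hρν : ρ + ν ≠ 0) :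
    Tendsto (fun x => log (1 + τR x / (1 + τL x)) / log (1 + (1 + τR x) / τL x))
      l (𝓝 (ρ / (ρ + ν))) := by
  have hone : HasGrowthExponent l t (fun _ => 1) 0 := .one
  have hnum : HasGrowthExponent l t (fun x => 1 + τR x / (1 + τL x)) ρ := by
    simpa [hρ, hν] using hone.add (hR.div (hone.add hL ht)) ht
  have hden : HasGrowthExponent l t (fun x => 1 + (1 + τR x) / τL x) (ρ + ν) := by
    simpa [hρ, add_nonneg hρ hν] using hone.add ((hone.add hR ht).div hL) ht
  exact hnum.tendsto_log_div_log_of_ne_zero hden hρν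

/-- For every `ν > 0`, as `λ → 1⁺`,
`log(1 + (1/(λ-1)) / (1 + (λ-1)^ν)) / log(1 + (1 + 1/(λ-1)) / (λ-1)^ν)` tends to
`1/(1+ν)` (real powers, natural logarithm, limit along `𝓝[>] 1`). -/
theorem limit_of_dimension_bound (ν : ℝ) (hν : 0 < ν) :
    Tendsto (fun l : ℝ =>
        Real.log (1 + (1 / (l - 1)) / (1 + (l - 1) ^ ν)) /
          Real.log (1 + (1 + 1 / (l - 1)) / (l - 1) ^ ν))
      (𝓝[>] (1 : ℝ)) (𝓝 (1 / (1 + ν))) := by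
  have ht := tendsto_one_div_sub_nhdsGT (1 : ℝ)
  have hR := HasGrowthExponent.self ht
  have hL : HasGrowthExponent (𝓝[>] 1) (fun l : ℝ => 1 / (l - 1)) (fun l => (l - 1) ^ ν) (-ν) := by
    simpa only [one_div, inv_inv, mul_neg_one] using hR.inv.rpow_const ν
  exact limit_of_dimension_bound_general ht hR hL zero_le_one hν.le (by positivity)
end

section
/- Let A be an invertible continuous linear map of the Euclidean plane ℝ² and let u₁, u₂ be nonzero vectors in ℝ². Then sin ∠(A u₁, A u₂) ≤ ‖A‖ · ‖A⁻¹‖ · sin ∠(u₁, u₂). -/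
/-!
For `x ≠ 0`, the number `sin ∠(x, y) * ‖y‖` is the distance from `y` to the line spanned by `x`,
that is, the minimum over `t` of `‖y - t • x‖`. A continuous linear map `A` multiplies this distance
by at most `‖A‖`, since it sends `y - t • x` to `A y - t • A x`. If `A` is invertible, dividing by
`‖A y‖` and using `‖y‖ ≤ ‖A⁻¹‖ * ‖A y‖` gives the bound on the sine itself.
-/

open InnerProductGeometry

section

variable {V W : Type*} [NormedAddCommGroup V] [InnerProductSpace ℝ V]
  [NormedAddCommGroup W] [InnerProductSpace ℝ W]

/-- Pythagoras: the last term is the squared distance from `t • x` to the foot of the perpendicular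
dropped from `y` onto the line `ℝ x`. -/
theorem norm_sub_smul_sq_eq_sin_angle_sq_add (x y : V) (t : ℝ) :
    ‖y - t • x‖ ^ 2 = (Real.sin (angle x y) * ‖y‖) ^ 2 +
      (t * ‖x‖ - Real.cos (angle x y) * ‖y‖) ^ 2 := by
  have norm_smul_sq : ‖t • x‖ ^ 2 = t ^ 2 * ‖x‖ ^ 2 := by
    rw [norm_smul, mul_pow, Real.norm_eq_abs, sq_abs]
  rw [norm_sub_sq_real, real_inner_smul_right, real_inner_comm,
    ← cos_angle_mul_norm_mul_norm x y, norm_smul_sq]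
  linear_combination (-‖y‖ ^ 2) * Real.sin_sq_add_cos_sq (angle x y)

theorem sin_angle_mul_norm_le_norm_sub_smul (x y : V) (t : ℝ) :
    Real.sin (angle x y) * ‖y‖ ≤ ‖y - t • x‖ := by
  refine le_of_sq_le_sq ?_ (norm_nonneg _)
  rw [norm_sub_smul_sq_eq_sin_angle_sq_add]
  exact le_add_of_nonneg_right (sq_nonneg _)

theorem exists_norm_sub_smul_eq_sin_angle_mul_norm {x : V} (hx : x ≠ 0) (y : V) :
    ∃ t : ℝ, ‖y - t • x‖ = Real.sin (angle x y) * ‖y‖ := by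
  refine ⟨Real.cos (angle x y) * ‖y‖ / ‖x‖, ?_⟩
  rw [← sq_eq_sq₀ (norm_nonneg _) (mul_nonneg (sin_angle_nonneg x y) (norm_nonneg y)),
    norm_sub_smul_sq_eq_sin_angle_sq_add, div_mul_cancel₀ _ (norm_ne_zero_iff.mpr hx), sub_self,
    zero_pow two_ne_zero, add_zero]

theorem sin_angle_map_mul_norm_map_le (A : V →L[ℝ] W) {x : V} (hx : x ≠ 0) (y : V) :
    Real.sin (angle (A x) (A y)) * ‖A y‖ ≤ ‖A‖ * (Real.sin (angle x y) * ‖y‖) := by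
  obtain ⟨t, ht⟩ := exists_norm_sub_smul_eq_sin_angle_mul_norm hx y
  calc Real.sin (angle (A x) (A y)) * ‖A y‖
      ≤ ‖A y - t • A x‖ := sin_angle_mul_norm_le_norm_sub_smul (A x) (A y) t
    _ = ‖A (y - t • x)‖ := by rw [map_sub, map_smul]
    _ ≤ ‖A‖ * ‖y - t • x‖ := A.le_opNorm _
    _ = ‖A‖ * (Real.sin (angle x y) * ‖y‖) := by rw [ht]

theorem sin_angle_image_le_general (A : V ≃L[ℝ] W) {x y : V} (hx : x ≠ 0) (hy : y ≠ 0) :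
    Real.sin (angle (A x) (A y)) ≤
      ‖(A : V →L[ℝ] W)‖ * ‖(A.symm : W →L[ℝ] V)‖ * Real.sin (angle x y) := by
  have norm_map_pos : 0 < ‖A y‖ := norm_pos_iff.mpr (A.map_ne_zero_iff.mpr hy)
  have norm_le : ‖y‖ ≤ ‖(A.symm : W →L[ℝ] V)‖ * ‖A y‖ := by
    simpa using (A.symm : W →L[ℝ] V).le_opNorm (A y)
  have sin_nonneg : 0 ≤ Real.sin (angle x y) := sin_angle_nonneg x y
  refine le_of_mul_le_mul_right ?_ norm_map_pos
  calc Real.sin (angle (A x) (A y)) * ‖A y‖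
      ≤ ‖(A : V →L[ℝ] W)‖ * (Real.sin (angle x y) * ‖y‖) :=
        sin_angle_map_mul_norm_map_le (A : V →L[ℝ] W) hx y
    _ ≤ ‖(A : V →L[ℝ] W)‖ * (Real.sin (angle x y) * (‖(A.symm : W →L[ℝ] V)‖ * ‖A y‖)) := by
        gcongr
    _ = ‖(A : V →L[ℝ] W)‖ * ‖(A.symm : W →L[ℝ] V)‖ * Real.sin (angle x y) * ‖A y‖ := by ring

end

/-- Let `A` be an invertible continuous linear map of the Euclidean plane `ℝ²` and
`u₁, u₂` nonzero vectors. Then `sin ∠(A u₁, A u₂) ≤ ‖A‖ ⬝ ‖A⁻¹‖ ⬝ sin ∠(u₁, u₂)`,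
where `∠` is the undirected angle between nonzero vectors and `‖·‖` the operator norm. -/
theorem sin_angle_image_le (A : EuclideanSpace ℝ (Fin 2) ≃L[ℝ] EuclideanSpace ℝ (Fin 2))
    (u₁ u₂ : EuclideanSpace ℝ (Fin 2)) (h₁ : u₁ ≠ 0) (h₂ : u₂ ≠ 0) :
    Real.sin (angle (A u₁) (A u₂)) ≤
      ‖(A : EuclideanSpace ℝ (Fin 2) →L[ℝ] EuclideanSpace ℝ (Fin 2))‖ *
        ‖(A.symm : EuclideanSpace ℝ (Fin 2) →L[ℝ] EuclideanSpace ℝ (Fin 2))‖ *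
          Real.sin (angle u₁ u₂) :=
  sin_angle_image_le_general A h₁ h₂
end

section
/- Let A be an invertible continuous linear map of the Euclidean plane ℝ², let B be any continuous linear map of ℝ², and let u ∈ ℝ² with u ≠ 0 and B u ≠ 0. Then sin ∠(A u, B u) ≤ ‖A⁻¹‖ · ‖A − B‖. -/
/-!
In the triangle with vertices `0`, `A u`, `B u`, the law of sines bounds `‖A u‖ sin ∠(A u, B u)` by
the opposite side `‖A u - B u‖ ≤ ‖A - B‖ ‖u‖`, and `‖u‖ ≤ ‖A⁻¹‖ ‖A u‖` says that `A` is
antilipschitz with constant `‖A⁻¹‖`; divide by `‖A u‖`.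
-/

open InnerProductGeometry

section

open scoped NNReal

variable {V : Type*} [NormedAddCommGroup V] [InnerProductSpace ℝ V]

lemma sin_angle_mul_norm_le_norm_sub (x y : V) : Real.sin (angle x y) * ‖x‖ ≤ ‖x - y‖ := by
  rw [sin_angle_mul_norm_eq_sin_angle_mul_norm]
  exact mul_le_of_le_one_left (norm_nonneg _) (Real.sin_le_one _)

theorem sin_angle_perturbation_general {E : Type*} [NormedAddCommGroup E] [NormedSpace ℝ E]
    {K : ℝ≥0} {A : E →L[ℝ] V} (hA : AntilipschitzWith K A) (B : E →L[ℝ] V) {u : E} (hu : u ≠ 0)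
    (_hBu : B u ≠ 0) :
    Real.sin (angle (A u) (B u)) ≤ K * ‖A - B‖ := by
  have norm_le : ‖u‖ ≤ K * ‖A u‖ := hA.le_mul_norm (map_zero A) u
  have norm_map_pos : 0 < ‖A u‖ := norm_pos_iff.mpr ((map_ne_zero_iff A hA.injective).mpr hu)
  refine le_of_mul_le_mul_right ?_ norm_map_pos
  calc Real.sin (angle (A u) (B u)) * ‖A u‖
      ≤ ‖A u - B u‖ := sin_angle_mul_norm_le_norm_sub (A u) (B u)
    _ ≤ ‖A - B‖ * ‖u‖ := (A - B).le_opNorm u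
    _ ≤ ‖A - B‖ * (K * ‖A u‖) := by gcongr
    _ = K * ‖A - B‖ * ‖A u‖ := by ring

end

/-- Let `A` be an invertible continuous linear map of the Euclidean plane `ℝ²`, let `B`
be any continuous linear map of `ℝ²`, and let `u ≠ 0` with `B u ≠ 0`. Then
`sin ∠(A u, B u) ≤ ‖A⁻¹‖ ⬝ ‖A - B‖`, where `∠` is the undirected angle between nonzero
vectors and `‖·‖` the operator norm. -/
theorem sin_angle_perturbation (A : EuclideanSpace ℝ (Fin 2) ≃L[ℝ] EuclideanSpace ℝ (Fin 2))
    (B : EuclideanSpace ℝ (Fin 2) →L[ℝ] EuclideanSpace ℝ (Fin 2))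
    (u : EuclideanSpace ℝ (Fin 2)) (hu : u ≠ 0) (hBu : B u ≠ 0) :
    Real.sin (angle (A u) (B u)) ≤
      ‖(A.symm : EuclideanSpace ℝ (Fin 2) →L[ℝ] EuclideanSpace ℝ (Fin 2))‖ *
        ‖(A : EuclideanSpace ℝ (Fin 2) →L[ℝ] EuclideanSpace ℝ (Fin 2)) - B‖ :=
  sin_angle_perturbation_general (A := A.toContinuousLinearMap) A.antilipschitz B hu hBu
end

section
/- For every real C₀ ≥ 1 and every ν ∈ (0,1) there exists h₀ ∈ (0,1) such that for all h ∈ (0, h₀): log(1 + (1/(4h)) / (1 + 500·C₀⁴·h^ν)) / log(1 + (1 + 4/h)·200·C₀⁴·h^{−ν}) > 1/(1 + 2ν). -/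
open Real

open Filter Topology

/-!
As `h → 0⁺` the argument of the numerator grows like a constant times `h⁻¹` and that of the
denominator like a constant times `h ^ (-(1 + ν))`. Constants disappear after division by `log h`,
so the quotient of the logarithms tends to `1 / (1 + ν)`, which exceeds `1 / (1 + 2ν)`.
-/

theorem tendsto_log_div_log_of_tendsto_mul_rpow {f : ℝ → ℝ} {a c : ℝ} (hc : c ≠ 0)
    (hf : Tendsto (fun x => f x * x ^ a) (𝓝[>] 0) (𝓝 c)) :
    Tendsto (fun x => log (f x) / log x) (𝓝[>] 0) (𝓝 (-a)) := by
  have hquot : Tendsto (fun x => log (f x * x ^ a) / log x) (𝓝[>] 0) (𝓝 0) :=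
    (hf.log hc).div_atBot tendsto_log_nhdsGT_zero
  have hlim : Tendsto (fun x => log (f x * x ^ a) / log x - a) (𝓝[>] 0) (𝓝 (-a)) := by
    simpa only [zero_sub] using hquot.sub_const a
  refine hlim.congr' ?_
  filter_upwards [self_mem_nhdsWithin, hf.eventually_ne hc,
    tendsto_log_nhdsGT_zero.eventually_ne_atBot 0] with x hx hfx hlog
  rw [log_mul (left_ne_zero_of_mul hfx) (right_ne_zero_of_mul hfx), log_rpow hx]
  field_simp
  ring

theorem tendsto_rpow_nhdsGT_zero {s : ℝ} (hs : 0 < s) :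
    Tendsto (fun x : ℝ => x ^ s) (𝓝[>] 0) (𝓝 0) := by
  simpa only [zero_rpow hs.ne'] using
    (continuousAt_rpow_const 0 s (Or.inr hs.le)).tendsto.mono_left nhdsWithin_le_nhds

theorem tendsto_log_one_add_div_div_log {a : ℝ} (ha : a ≠ 0) (b : ℝ) {ν : ℝ} (hν : 0 < ν) :
    Tendsto (fun h => log (1 + a / h / (1 + b * h ^ ν)) / log h) (𝓝[>] 0) (𝓝 (-1)) := by
  refine tendsto_log_div_log_of_tendsto_mul_rpow ha ?_
  have hid : Tendsto (fun h : ℝ => h) (𝓝[>] 0) (𝓝 0) := nhdsWithin_le_nhds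
  have hden : Tendsto (fun h : ℝ => 1 + b * h ^ ν) (𝓝[>] 0) (𝓝 1) := by
    simpa only [mul_zero, add_zero] using
      ((tendsto_rpow_nhdsGT_zero hν).const_mul b).const_add 1
  have hlim : Tendsto (fun h : ℝ => h + a / (1 + b * h ^ ν)) (𝓝[>] 0) (𝓝 a) := by
    simpa only [zero_add, div_one, Pi.div_apply] using
      hid.add (tendsto_const_nhds.div hden one_ne_zero)
  refine hlim.congr' ?_
  filter_upwards [self_mem_nhdsWithin] with h hh
  rw [rpow_one, add_mul, one_mul, div_right_comm, div_mul_cancel₀ _ (ne_of_gt hh)]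

theorem tendsto_log_one_add_mul_rpow_neg_div_log {a c ν : ℝ} (ha : a ≠ 0) (hc : c ≠ 0)
    (hν : -1 < ν) :
    Tendsto (fun h => log (1 + (1 + a / h) * c * h ^ (-ν)) / log h) (𝓝[>] 0)
      (𝓝 (-(1 + ν))) := by
  refine tendsto_log_div_log_of_tendsto_mul_rpow (mul_ne_zero ha hc) ?_
  have hid : Tendsto (fun h : ℝ => h) (𝓝[>] 0) (𝓝 0) := nhdsWithin_le_nhds
  have hpow : Tendsto (fun h : ℝ => h ^ (1 + ν)) (𝓝[>] 0) (𝓝 0) :=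
    tendsto_rpow_nhdsGT_zero (by linarith)
  have hlim : Tendsto (fun h : ℝ => h ^ (1 + ν) + (h + a) * c) (𝓝[>] 0) (𝓝 (a * c)) := by
    simpa only [zero_add] using hpow.add ((hid.add_const a).mul_const c)
  refine hlim.congr' ?_
  filter_upwards [self_mem_nhdsWithin] with h (hh : 0 < h)
  have hcancel : h ^ (-ν) * h ^ (1 + ν) = h := by
    rw [← rpow_add hh, neg_add_cancel_comm_assoc, rpow_one]
  calc h ^ (1 + ν) + (h + a) * c
      = h ^ (1 + ν) + (1 + a / h) * c * h := by field_simp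
    _ = (1 + (1 + a / h) * c * h ^ (-ν)) * h ^ (1 + ν) := by
      linear_combination -((1 + a / h) * c) * hcancel

theorem tendsto_log_one_add_div_log_one_add {a a' c ν : ℝ} (ha : a ≠ 0) (b : ℝ) (ha' : a' ≠ 0)
    (hc : c ≠ 0) (hν : 0 < ν) :
    Tendsto
      (fun h => log (1 + a / h / (1 + b * h ^ ν)) / log (1 + (1 + a' / h) * c * h ^ (-ν)))
      (𝓝[>] 0) (𝓝 (1 / (1 + ν))) := by
  have hlim := (tendsto_log_one_add_div_div_log ha b hν).div
    (tendsto_log_one_add_mul_rpow_neg_div_log ha' hc (by linarith : -1 < ν)) (by linarith)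
  rw [neg_div_neg_eq] at hlim
  refine hlim.congr' ?_
  filter_upwards [tendsto_log_nhdsGT_zero.eventually_ne_atBot 0] with h hlog
  exact div_div_div_cancel_right₀ hlog _ _

theorem exists_mem_Ioo_forall_of_eventually_nhdsGT {α : Type*} [LinearOrder α] [DenselyOrdered α]
    [TopologicalSpace α] [OrderTopology α] {a b : α} (hab : a < b) {p : α → Prop}
    (hp : ∀ᶠ x in 𝓝[>] a, p x) : ∃ u ∈ Set.Ioo a b, ∀ x ∈ Set.Ioo a u, p x := by
  obtain ⟨m, ham, hmb⟩ := exists_between hab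
  obtain ⟨u, ⟨hau, hum⟩, hu⟩ := (mem_nhdsGT_iff_exists_mem_Ioc_Ioo_subset ham).1 hp
  exact ⟨u, ⟨hau, hum.trans_lt hmb⟩, hu⟩

theorem henon_dimension_final_estimate_general {C₀ ν : ℝ} (hC₀ : C₀ ≠ 0) (hν : 0 < ν) :
    ∃ h₀ ∈ Set.Ioo (0 : ℝ) 1, ∀ h ∈ Set.Ioo (0 : ℝ) h₀,
      Real.log (1 + (1 / (4 * h)) / (1 + 500 * C₀ ^ 4 * h ^ ν)) /
          Real.log (1 + (1 + 4 / h) * 200 * C₀ ^ 4 * h ^ (-ν)) >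
        1 / (1 + 2 * ν) := by
  have hlim := tendsto_log_one_add_div_log_one_add (a := 1 / 4) (by norm_num) (500 * C₀ ^ 4)
    (four_ne_zero (α := ℝ)) (mul_ne_zero (by norm_num : (200 : ℝ) ≠ 0) (pow_ne_zero 4 hC₀)) hν
  have hlt : 1 / (1 + 2 * ν) < 1 / (1 + ν) := by gcongr; linarith
  refine exists_mem_Ioo_forall_of_eventually_nhdsGT zero_lt_one ?_
  filter_upwards [hlim.eventually_const_lt hlt] with h hh
  simpa only [div_div _ 4 h, ← mul_assoc] using hh

/-- For every `C₀ ≥ 1` and `ν ∈ (0,1)` there exists `h₀ ∈ (0,1)` such that for all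
`h ∈ (0, h₀)`:
`log(1 + (1/(4h)) / (1 + 500·C₀⁴·h^ν)) / log(1 + (1 + 4/h)·200·C₀⁴·h^(-ν)) > 1/(1+2ν)`
(real powers, natural logarithm). -/
theorem henon_dimension_final_estimate (C₀ : ℝ) (hC₀ : 1 ≤ C₀) (ν : ℝ)
    (hν : ν ∈ Set.Ioo (0 : ℝ) 1) :
    ∃ h₀ ∈ Set.Ioo (0 : ℝ) 1, ∀ h ∈ Set.Ioo (0 : ℝ) h₀,
      Real.log (1 + (1 / (4 * h)) / (1 + 500 * C₀ ^ 4 * h ^ ν)) /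
          Real.log (1 + (1 + 4 / h) * 200 * C₀ ^ 4 * h ^ (-ν)) >
        1 / (1 + 2 * ν) := by
  exact henon_dimension_final_estimate_general (zero_lt_one.trans_le hC₀).ne' hν.1
end
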